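/- Generalized Implicit Function Theorem: Let (X,‖·‖) be a Banach space, X' ⊂ X a linear subspace with a complete norm ‖·‖' such that the inclusion (X',‖·‖') ↪ (X,‖·‖) is continuous and the closed unit ball of X' is closed in X. Let 𝓜 be a Banach manifold, f ∈ 𝓜, 𝓤 ⊂ X open containing 0, and Ψ : 𝓜 × 𝓤 → X a C¹ map with Ψ(f,0) = 0 and Ψ(𝓜 × (𝓤 ∩ X')) ⊂ X'. Let A = D₂Ψ(f,0). Assume: (1) A(X') ⊂ X'; (2) 1 - A has a continuous linear right inverse J on X which maps X' into X' and restricts to a bounded operator on (X',‖·‖'); (3) for every ε > 0 there are neighborhoods 𝓜_ε of f and 𝓤_ε of 0 such that ‖Ψ(g,x) - A(x)‖' ≤ ε(1 + ‖x‖') for all g ∈ 𝓜_ε, x ∈ 𝓤_ε ∩ X'. Then for any neighborhood 𝓥 ⊂ X' of 0 in (X',‖·‖'), there exist a neighborhood 𝓝 of f in 𝓜 and a map c : 𝓝 → 𝓥 with c(f) = 0, Ψ(g, c(g)) = c(g) for all g ∈ 𝓝, and c is C¹ as a map 𝓝 → X. -/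

import Mathlib

/-! The substitution `x = J z` turns `Ψ (g, x) = x` into the fixed point equation `z = Ψ (g, J z)
- A (J z)`, whose right-hand side has vanishing `z`-derivative at `(f, 0)` and is therefore a
contraction of `X` near `0`. By the smallness hypothesis it also preserves a small ball of `X'`.
That ball is closed in `X`, so the fixed points found by contraction in the norm of `X` belong to
it: no contraction estimate in the norm of `X'` is needed. Their smooth dependence on `g` is a
statement about `X` alone. -/

open Filter Function Metric Set Topology
open scoped ContDiff NNReal

section Contraction

variable {P α : Type*} [TopologicalSpace P] [MetricSpace α] {K : ℝ≥0}

theorem dist_le_of_lipschitzOnWith_of_isFixedPt {f : α → α} {s : Set α} (hK : K < 1)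
    (hf : LipschitzOnWith K f s) {x y : α} (hx : x ∈ s) (hy : y ∈ s) (hfy : IsFixedPt f y) :
    dist x y ≤ dist x (f x) / (1 - K) := by
  have hK' : (0 : ℝ) < 1 - K := sub_pos.2 (mod_cast hK)
  have hstep : dist x y ≤ dist x (f x) + K * dist x y :=
    calc dist x y ≤ dist x (f x) + dist (f x) (f y) := by
          simpa only [hfy.eq] using dist_triangle x (f x) y
      _ ≤ dist x (f x) + K * dist x y := by gcongr; exact hf.dist_le_mul x hx y hy
  rw [le_div_iff₀ hK']
  linarith

theorem exists_isFixedPt_of_lipschitzOnWith_closedBall [CompleteSpace α] {f : α → α} {b : α}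
    {ρ : ℝ} (hK : K < 1) (hf : LipschitzOnWith K f (closedBall b ρ)) (hρ : 0 ≤ ρ)
    (hb : dist (f b) b ≤ (1 - K) * ρ) {S : Set α} (hS : IsClosed S) (hbS : b ∈ S)
    (hfS : MapsTo f (closedBall b ρ ∩ S) S) : ∃ z ∈ closedBall b ρ ∩ S, IsFixedPt f z := by
  have hbρ : b ∈ closedBall b ρ := mem_closedBall_self hρ
  have hball : MapsTo f (closedBall b ρ) (closedBall b ρ) := fun z hz =>
    calc dist (f z) b ≤ dist (f z) (f b) + dist (f b) b := dist_triangle _ _ _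
      _ ≤ K * ρ + (1 - K) * ρ := by
        gcongr
        exact (hf.dist_le_mul z hz b hbρ).trans (by gcongr; exact hz)
      _ = ρ := by ring
  have hmaps : MapsTo f (closedBall b ρ ∩ S) (closedBall b ρ ∩ S) := fun z hz =>
    ⟨hball hz.1, hfS hz⟩
  have hcontr : ContractingWith K (hmaps.restrict f _ _) :=
    ⟨hK, (hf.mono inter_subset_left).mapsToRestrict hmaps⟩
  obtain ⟨z, hz, hfz, -⟩ := hcontr.exists_fixedPoint' (isClosed_closedBall.inter hS).isComplete
    hmaps ⟨hbρ, hbS⟩ (edist_ne_top _ _)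
  exact ⟨z, hz, hfz⟩

theorem continuousAt_of_eventually_isFixedPt {Φ : P × α → α} {y : P → α} {x : P} {s : Set α}
    (hK : K < 1) (hΦ : ContinuousAt Φ (x, y x))
    (hlip : ∀ᶠ x' in 𝓝 x, LipschitzOnWith K (fun z => Φ (x', z)) s)
    (hy : ∀ᶠ x' in 𝓝 x, y x' ∈ s ∧ Φ (x', y x') = y x') : ContinuousAt y x := by
  obtain ⟨hyx, hfix⟩ := hy.self_of_nhds
  have hdefect : Tendsto (fun x' => dist (y x) (Φ (x', y x)) / (1 - K)) (𝓝 x) (𝓝 0) := by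
    have hslice : ContinuousAt (fun x' => Φ (x', y x)) x :=
      ContinuousAt.comp (f := fun x' => (x', y x)) hΦ (by fun_prop)
    simpa [hfix] using
      (tendsto_const_nhds (x := y x).dist hslice.tendsto).div_const (1 - K : ℝ)
  refine tendsto_iff_dist_tendsto_zero.2
    (squeeze_zero' (.of_forall fun _ => dist_nonneg) ?_ hdefect)
  filter_upwards [hlip, hy] with x' hlip' hy'
  rw [dist_comm]
  exact dist_le_of_lipschitzOnWith_of_isFixedPt hK hlip' hyx hy'.1 hy'.2

theorem exists_continuousAt_fixedPoint [CompleteSpace α] {Φ : P × α → α} {a : P} {b : α}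
    (hK : K < 1) {t : Set α} (ht : t ∈ 𝓝 b)
    (hlip : ∀ᶠ x in 𝓝 a, LipschitzOnWith K (fun z => Φ (x, z)) t)
    (hΦ : ∀ᶠ p in 𝓝 (a, b), ContinuousAt Φ p) (hab : Φ (a, b) = b)
    {S : Set α} (hS : IsClosed S) (hbS : b ∈ S) (hmaps : ∀ᶠ p in 𝓝 (a, b), p.2 ∈ S → Φ p ∈ S) :
    ∃ y : P → α, y a = b ∧ ∀ᶠ x in 𝓝 a, y x ∈ S ∧ Φ (x, y x) = y x ∧ ContinuousAt y x := by
  have hK' : (0 : ℝ) < 1 - K := sub_pos.2 (mod_cast hK)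
  have hsnd : ∀ᶠ p : P × α in 𝓝 (a, b), p.2 ∈ t := continuousAt_snd.preimage_mem_nhds ht
  obtain ⟨⟨u, ρ⟩, ⟨hu : u ∈ 𝓝 a, hρ : 0 < ρ⟩, hnear⟩ :=
    ((𝓝 a).basis_sets.prod_nhds (nhds_basis_closedBall (x := b))).eventually_iff.1
      (hsnd.and (hΦ.and hmaps))
  replace hnear : ∀ p ∈ u ×ˢ closedBall b ρ,
      p.2 ∈ t ∧ ContinuousAt Φ p ∧ (p.2 ∈ S → Φ p ∈ S) := fun _ hp => hnear hp
  replace hlip : ∀ᶠ x in 𝓝 a, LipschitzOnWith K (fun z => Φ (x, z)) (closedBall b ρ) :=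
    hlip.mono fun x hx => hx.mono fun z hz => (hnear _ (mk_mem_prod (mem_of_mem_nhds hu) hz)).1
  have hcentre : ∀ᶠ x in 𝓝 a, dist (Φ (x, b)) b < (1 - K) * ρ := by
    have hslice : ContinuousAt (fun x => Φ (x, b)) a :=
      ContinuousAt.comp (f := fun x => (x, b)) hΦ.self_of_nhds (by fun_prop)
    refine (hslice.dist continuousAt_const).eventually_lt_const ?_
    simpa only [hab, dist_self] using mul_pos hK' hρ
  have hex : ∀ᶠ x in 𝓝 a, ∃ z, z ∈ closedBall b ρ ∩ S ∧ Φ (x, z) = z := by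
    filter_upwards [hu, hlip, hcentre] with x hxu hx hxb
    exact exists_isFixedPt_of_lipschitzOnWith_closedBall hK hx hρ.le hxb.le hS hbS
      fun z hz => (hnear _ (mk_mem_prod hxu hz.1)).2.2 hz.2
  have : Nonempty α := ⟨b⟩
  obtain ⟨y, hy⟩ := hex.choice
  refine ⟨y, ?_, ?_⟩
  · have hdist := dist_le_of_lipschitzOnWith_of_isFixedPt hK hlip.self_of_nhds
      (mem_closedBall_self hρ.le) hy.self_of_nhds.1.1 hy.self_of_nhds.2
    rw [hab, dist_self, zero_div] at hdist
    exact (dist_le_zero.1 hdist).symm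
  · filter_upwards [hu, hy, hy.eventually_nhds, hlip.eventually_nhds] with x hxu hyx hynear hxlip
    exact ⟨hyx.1.2, hyx.2, continuousAt_of_eventually_isFixedPt hK
      (hnear _ (mk_mem_prod hxu hyx.1.1)).2.1 hxlip (hynear.mono fun _ h => ⟨h.1.1, h.2⟩)⟩

end Contraction

section Smoothness

variable {𝕜 E F : Type*} [NontriviallyNormedField 𝕜] [NormedAddCommGroup E] [NormedSpace 𝕜 E]
  [NormedAddCommGroup F] [NormedSpace 𝕜 F] {Φ : E × F → F} {y : E → F} {x : E}

theorem hasFDerivAt_of_eventually_fixedPoint {L : E × F →L[𝕜] F} {B : F →L[𝕜] F}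
    (hΦ : HasFDerivAt Φ L (x, y x)) (hy : ContinuousAt y x) (hfix : ∀ᶠ z in 𝓝 x, Φ (z, y z) = y z)
    (hB : B * (1 - L ∘L .inr 𝕜 E F) = 1) : HasFDerivAt y (B ∘L L ∘L .inl 𝕜 E F) x := by
  let R : E × F →L[𝕜] E × F :=
    .prod (.fst 𝕜 E F) (B ∘L (.snd 𝕜 E F + L ∘L .inl 𝕜 E F ∘L .fst 𝕜 E F))
  have hR : LeftInverse R ((ContinuousLinearMap.fst 𝕜 E F).prod (.snd 𝕜 E F - L)) := by
    rintro ⟨u, w⟩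
    have hsplit : L (u, w) = L (u, 0) + L (0, w) := by rw [← map_add]; simp
    have hBw : B (w - L (0, w)) = w := by simpa using DFunLike.congr_fun hB w
    have hrecover : B (w - L (u, w) + L (u, 0)) = w := by
      rw [hsplit, sub_add_eq_sub_sub_swap, sub_add_cancel, hBw]
    simpa [R] using hrecover
  have hgraph : HasFDerivAt (fun z => (z, y z)) (R ∘L .inl 𝕜 E F) x :=
    HasFDerivAt.of_comp_of_leftInverse (f := fun p => (p.1, p.2 - Φ p))
      (continuousAt_id.prodMk hy) (hasFDerivAt_fst.prodMk (hasFDerivAt_snd.sub hΦ))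
      (hasFDerivAt_prodMk_left x 0) (hfix.mono fun z hz => by simp [hz]) hR
  exact hgraph.snd.congr_fderiv (by ext; simp [R])

theorem contDiffAt_succ_of_eventually_fixedPoint [CompleteSpace F] {n : ℕ}
    (hΦ : ContDiffAt 𝕜 (n + 1) Φ (x, y x)) (hy : ContDiffAt 𝕜 n y x)
    (hfix : ∀ᶠ z in 𝓝 x, Φ (z, y z) = y z)
    (hunit : IsUnit (1 - fderiv 𝕜 Φ (x, y x) ∘L .inr 𝕜 E F)) : ContDiffAt 𝕜 (n + 1) y x := by
  have hgraph : ContDiffAt 𝕜 n (fun z => (z, y z)) x := contDiffAt_id.prodMk hy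
  have hΦ' : ContDiffAt 𝕜 n (fun z => fderiv 𝕜 Φ (z, y z)) x :=
    (hΦ.fderiv_right le_rfl).comp x hgraph
  have hD₂ : ContDiffAt 𝕜 n (fun z => 1 - fderiv 𝕜 Φ (z, y z) ∘L .inr 𝕜 E F) x :=
    contDiffAt_const.sub (hΦ'.clm_comp contDiffAt_const)
  have hinv : ContDiffAt 𝕜 n
      (fun z => Ring.inverse (1 - fderiv 𝕜 Φ (z, y z) ∘L .inr 𝕜 E F)) x := by
    obtain ⟨u, hu⟩ := hunit
    exact ContDiffAt.comp x (hu ▸ contDiffAt_ringInverse 𝕜 u) hD₂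
  have hderiv : ∀ᶠ z in 𝓝 x, HasFDerivAt y
      (Ring.inverse (1 - fderiv 𝕜 Φ (z, y z) ∘L .inr 𝕜 E F) ∘L
        fderiv 𝕜 Φ (z, y z) ∘L .inl 𝕜 E F) z := by
    filter_upwards [hgraph.continuousAt.eventually (hΦ.eventually (by simp)),
      hy.eventually (by simp), hfix.eventually_nhds,
      hD₂.continuousAt.eventually (Units.isOpen.mem_nhds hunit)] with z hΦz hyz hfixz hunitz
    exact hasFDerivAt_of_eventually_fixedPoint (hΦz.differentiableAt (by simp)).hasFDerivAt
      hyz.continuousAt hfixz (Ring.inverse_mul_cancel _ hunitz)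
  exact contDiffAt_succ_iff_hasFDerivAt.2
    ⟨_, ⟨_, hderiv, fun z hz => hz⟩, hinv.clm_comp (hΦ'.clm_comp contDiffAt_const)⟩

theorem contDiffAt_of_eventually_fixedPoint [CompleteSpace F] {n : ℕ∞}
    (hΦ : ContDiffAt 𝕜 n Φ (x, y x)) (hy : ∀ᶠ z in 𝓝 x, ContinuousAt y z)
    (hfix : ∀ᶠ z in 𝓝 x, Φ (z, y z) = y z)
    (hunit : IsUnit (1 - fderiv 𝕜 Φ (x, y x) ∘L .inr 𝕜 E F)) : ContDiffAt 𝕜 n y x := by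
  refine contDiffWithinAt_iff_forall_nat_le.2 fun m hm => ?_
  rw [contDiffWithinAt_univ]
  replace hΦ : ContDiffAt 𝕜 m Φ (x, y x) := hΦ.of_le (mod_cast hm)
  clear hm
  induction m with
  | zero => exact contDiffAt_zero.2 ⟨_, hy, fun z hz => ContinuousAt.continuousWithinAt hz⟩
  | succ m ih =>
    exact contDiffAt_succ_of_eventually_fixedPoint hΦ
      (ih (hΦ.of_le (mod_cast m.le_succ))) hfix hunit

theorem exists_lipschitzOnWith_of_hasStrictFDerivAt_prod {L : E × F →L[𝕜] F} {a : E} {b : F}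
    (hΦ : HasStrictFDerivAt Φ L (a, b)) {K : ℝ≥0} (hK : ‖L ∘L .inr 𝕜 E F‖₊ < K) :
    ∃ t ∈ 𝓝 b, ∀ᶠ x in 𝓝 a, LipschitzOnWith K (fun z => Φ (x, z)) t := by
  let D := (L ∘L .inr 𝕜 E F) ∘L .snd 𝕜 E F
  have hD : ‖D‖₊ < K := by
    calc ‖D‖₊ ≤ ‖L ∘L .inr 𝕜 E F‖₊ * ‖ContinuousLinearMap.snd 𝕜 E F‖₊ :=
          ContinuousLinearMap.opNNNorm_comp_le _ _
      _ ≤ ‖L ∘L .inr 𝕜 E F‖₊ * 1 := by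
        gcongr
        exact ContinuousLinearMap.norm_snd_le 𝕜 E F
      _ < K := by rwa [mul_one]
  -- Subtracting the first partial derivative does not affect increments in the second variable.
  have hsub : HasStrictFDerivAt (fun p => Φ p - L (p.1, 0)) D (a, b) := by
    refine (hΦ.sub (L ∘L .inl 𝕜 E F ∘L .fst 𝕜 E F).hasStrictFDerivAt).congr_fderiv ?_
    ext <;> simp [D, Prod.mk_zero_zero]
  obtain ⟨s, hs, hlip⟩ := hsub.exists_lipschitzOnWith_of_nnnorm_lt K hD
  obtain ⟨u, hu, t, ht, hut⟩ := mem_nhds_prod_iff.1 hs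
  refine ⟨t, ht, eventually_of_mem hu fun x hx => ?_⟩
  refine LipschitzOnWith.of_dist_le_mul fun z hz z' hz' => ?_
  simpa [Prod.dist_eq] using hlip.dist_le_mul (x, z) (hut ⟨hx, hz⟩) (x, z') (hut ⟨hx, hz'⟩)

end Smoothness

section FixedPoint

variable {𝕜 E F : Type*} [RCLike 𝕜] [NormedAddCommGroup E] [NormedSpace 𝕜 E]
  [NormedAddCommGroup F] [NormedSpace 𝕜 F] [CompleteSpace F] {n : ℕ∞}

theorem exists_contDiffAt_fixedPoint {Φ : E × F → F} {a : E} {b : F} (hn : n ≠ 0)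
    (hΦ : ∀ᶠ p in 𝓝 (a, b), ContDiffAt 𝕜 n Φ p) (hab : Φ (a, b) = b)
    (hD₂ : ‖fderiv 𝕜 Φ (a, b) ∘L .inr 𝕜 E F‖ < 1) {S : Set F} (hS : IsClosed S) (hbS : b ∈ S)
    (hmaps : ∀ᶠ p in 𝓝 (a, b), p.2 ∈ S → Φ p ∈ S) :
    ∃ y : E → F, y a = b ∧
      ∀ᶠ x in 𝓝 a, y x ∈ S ∧ Φ (x, y x) = y x ∧ ContDiffAt 𝕜 n y x := by
  have hn' : (n : ℕ∞ω) ≠ 0 := mod_cast hn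
  obtain ⟨K, hDK, hK⟩ := exists_between (show ‖fderiv 𝕜 Φ (a, b) ∘L .inr 𝕜 E F‖₊ < 1 from hD₂)
  obtain ⟨t, ht, hlip⟩ := exists_lipschitzOnWith_of_hasStrictFDerivAt_prod
    (hΦ.self_of_nhds.hasStrictFDerivAt hn') hDK
  obtain ⟨y, hya, hy⟩ := exists_continuousAt_fixedPoint hK ht hlip
    (hΦ.mono fun _ h => h.continuousAt) hab hS hbS hmaps
  have hgraph : Tendsto (fun x => (x, y x)) (𝓝 a) (𝓝 (a, b)) := by
    have hcont : ContinuousAt (fun x => (x, y x)) a :=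
      continuousAt_id.prodMk hy.self_of_nhds.2.2
    simpa only [ContinuousAt, hya] using hcont
  have hnorm : ∀ᶠ p in 𝓝 (a, b), ‖fderiv 𝕜 Φ p ∘L .inr 𝕜 E F‖ < 1 :=
    ((hΦ.self_of_nhds.continuousAt_fderiv hn').clm_comp
      continuousAt_const).norm.eventually_lt_const hD₂
  refine ⟨y, hya, ?_⟩
  filter_upwards [hy, hy.eventually_nhds, hgraph.eventually hΦ, hgraph.eventually hnorm]
    with x hx hynear hΦx hnormx
  exact ⟨hx.1, hx.2.1, contDiffAt_of_eventually_fixedPoint hΦx (hynear.mono fun _ h => h.2.2)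
    (hynear.mono fun _ h => h.2.1) (isUnit_one_sub_of_norm_lt_one hnormx)⟩

theorem exists_contDiffAt_fixedPoint_of_rightInverse {Ψ : E × F → F} {a : E} (hn : n ≠ 0)
    (hΨ : ∀ᶠ p in 𝓝 (a, 0), ContDiffAt 𝕜 n Ψ p) (ha : Ψ (a, 0) = 0) {A J : F →L[𝕜] F}
    (hA : HasFDerivAt (fun x => Ψ (a, x)) A 0) (hJ : RightInverse J (1 - A : F →L[𝕜] F))
    {S : Set F} (hS : IsClosed S) (h0S : 0 ∈ S)
    (hmaps : ∀ᶠ p : E × F in 𝓝 (a, 0), p.2 ∈ S → Ψ (p.1, J p.2) - A (J p.2) ∈ S) :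
    ∃ y : E → F, y a = 0 ∧
      ∀ᶠ x in 𝓝 a, y x ∈ S ∧ Ψ (x, J (y x)) = J (y x) ∧ ContDiffAt 𝕜 n y x := by
  let Φ : E × F → F := fun p => Ψ (p.1, J p.2) - A (J p.2)
  have hsubst : Tendsto (fun p : E × F => (p.1, J p.2)) (𝓝 (a, 0)) (𝓝 (a, 0)) := by
    have : ContinuousAt (fun p : E × F => (p.1, J p.2)) (a, 0) := by fun_prop
    simpa [ContinuousAt] using this
  have hΦ : ∀ᶠ p in 𝓝 (a, 0), ContDiffAt 𝕜 n Φ p := by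
    filter_upwards [hsubst.eventually hΨ] with p hp
    exact (hp.comp p (contDiffAt_fst.prodMk (J.contDiff.contDiffAt.comp p contDiffAt_snd))).sub
      ((A ∘L J).contDiff.contDiffAt.comp p contDiffAt_snd)
  have hD₂ : fderiv 𝕜 Φ (a, 0) ∘L .inr 𝕜 E F = 0 := by
    have hpartial : HasFDerivAt (fun z => Φ (a, z)) (fderiv 𝕜 Φ (a, 0) ∘L .inr 𝕜 E F) 0 :=
      (hΦ.self_of_nhds.differentiableAt (mod_cast hn)).hasFDerivAt.comp (0 : F)
        (hasFDerivAt_prodMk_right a 0)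
    have hΨJ : HasFDerivAt (fun z => Ψ (a, J z)) (A ∘L J) 0 :=
      HasFDerivAt.comp (g := fun x => Ψ (a, x)) 0 (by rwa [map_zero]) J.hasFDerivAt
    have hcancel : HasFDerivAt (fun z => Φ (a, z)) (A ∘L J - A ∘L J) 0 :=
      hΨJ.sub (A ∘L J).hasFDerivAt
    rw [hpartial.unique hcancel, sub_self]
  obtain ⟨y, hya, hy⟩ := exists_contDiffAt_fixedPoint hn hΦ (by simp [Φ, ha])
    (by rw [hD₂, norm_zero]; exact one_pos) hS h0S hmaps
  refine ⟨y, hya, hy.mono fun x ⟨hxS, hfix, hyx⟩ => ⟨hxS, ?_, hyx⟩⟩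
  have hJy : J (y x) - A (J (y x)) = y x := hJ (y x)
  exact sub_left_injective (hfix.trans hJy.symm)

end FixedPoint

theorem isClosed_setOf_mem_and_le_of_isClosed_unitBall {𝕜 X : Type*} [RCLike 𝕜]
    [TopologicalSpace X] [AddCommGroup X] [Module 𝕜 X] [ContinuousConstSMul 𝕜 X]
    {X' : Submodule 𝕜 X} {norm' : X → ℝ}
    (hsmul : ∀ c : 𝕜, ∀ x ∈ X', norm' (c • x) = ‖c‖ * norm' x)
    (hball : IsClosed {x | x ∈ X' ∧ norm' x ≤ 1}) {r : ℝ} (hr : 0 < r) :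
    IsClosed {x | x ∈ X' ∧ norm' x ≤ r} := by
  have hr' : ((r⁻¹ : ℝ) : 𝕜) ≠ 0 := RCLike.ofReal_ne_zero.2 (inv_ne_zero hr.ne')
  convert hball.preimage (continuous_const_smul ((r⁻¹ : ℝ) : 𝕜)) using 1
  ext x
  simp only [mem_preimage, mem_ofPred_eq, X'.smul_mem_iff hr']
  refine and_congr_right fun hx => ?_
  rw [hsmul _ x hx, RCLike.norm_ofReal, abs_of_pos (inv_pos.2 hr), inv_mul_le_iff₀ hr, mul_one]

theorem exists_pos_forall_le_of_forall_le_mul {α : Type*} {s : Set α} {p q : α → ℝ} {C δ : ℝ}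
    (hp : ∀ x ∈ s, 0 ≤ p x) (hqp : ∀ x ∈ s, q x ≤ C * p x) (hδ : 0 < δ) :
    ∃ r > 0, ∀ x ∈ s, p x ≤ r → q x ≤ δ := by
  refine ⟨δ / (1 + |C|), by positivity, fun x hx hxr => ?_⟩
  have hC : C ≤ 1 + |C| := by linarith [le_abs_self C]
  calc q x ≤ C * p x := hqp x hx
    _ ≤ (1 + |C|) * (δ / (1 + |C|)) := mul_le_mul hC hxr (hp x hx) (by positivity)
    _ = δ := by field_simp

theorem stmt7_general {𝕜 X G : Type*} [RCLike 𝕜] [NormedAddCommGroup X] [NormedSpace 𝕜 X]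
    [CompleteSpace X] [NormedAddCommGroup G] [NormedSpace 𝕜 G] {n : ℕ∞} (hn : n ≠ 0)
    {X' : Submodule 𝕜 X} {norm' : X → ℝ} (hnonneg : ∀ x ∈ X', 0 ≤ norm' x)
    (hsmul : ∀ c : 𝕜, ∀ x ∈ X', norm' (c • x) = ‖c‖ * norm' x)
    (hball : IsClosed {x | x ∈ X' ∧ norm' x ≤ 1})
    {f : G} {U : Set X} (hUopen : IsOpen U) (hU0 : 0 ∈ U) {Ψ : G × X → X}
    (hΨ : ContDiffOn 𝕜 n Ψ (univ ×ˢ U)) (hΨf0 : Ψ (f, 0) = 0)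
    (hΨX' : ∀ g, ∀ x ∈ U, x ∈ X' → Ψ (g, x) ∈ X')
    {A : X →L[𝕜] X} (hA : HasFDerivAt (fun x => Ψ (f, x)) A 0) (hAX' : ∀ x ∈ X', A x ∈ X')
    {J : X →L[𝕜] X} (hJ : ∀ x, J x - A (J x) = x) (hJX' : ∀ x ∈ X', J x ∈ X')
    {CJ : ℝ} (hCJ : ∀ x ∈ X', norm' (J x) ≤ CJ * norm' x)
    (hsmall : ∀ ε : ℝ, 0 < ε → ∃ (Mε : Set G) (Uε : Set X), IsOpen Mε ∧ f ∈ Mε ∧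
      IsOpen Uε ∧ 0 ∈ Uε ∧ Uε ⊆ U ∧
      ∀ g ∈ Mε, ∀ x ∈ Uε, x ∈ X' → norm' (Ψ (g, x) - A x) ≤ ε * (1 + norm' x))
    {V : Set X} (hV : ∃ δ : ℝ, 0 < δ ∧ ∀ x ∈ X', norm' x ≤ δ → x ∈ V) :
    ∃ (N : Set G) (c : G → X), IsOpen N ∧ f ∈ N ∧ c f = 0 ∧
      (∀ g ∈ N, c g ∈ V ∧ Ψ (g, c g) = c g) ∧ ContDiffOn 𝕜 n c N := by
  obtain ⟨δ, hδ, hδV⟩ := hV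
  obtain ⟨r, hr, hJr⟩ :=
    exists_pos_forall_le_of_forall_le_mul (s := (X' : Set X)) hnonneg hCJ hδ
  obtain ⟨M, W, hM, hfM, hW, h0W, hWU, hMW⟩ := hsmall (r / (1 + δ)) (by positivity)
  have hzero : norm' 0 = 0 := by simpa using hsmul 0 0 X'.zero_mem
  have hΨ' : ∀ᶠ p in 𝓝 (f, 0), ContDiffAt 𝕜 n Ψ p :=
    have hopen : IsOpen (univ ×ˢ U : Set (G × X)) := isOpen_univ.prod hUopen
    (hopen.eventually_mem (mk_mem_prod (mem_univ f) hU0)).mono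
      fun p hp => hΨ.contDiffAt (hopen.mem_nhds hp)
  have hnear : ∀ᶠ p : G × X in 𝓝 (f, 0), p.1 ∈ M ∧ J p.2 ∈ W :=
    ((hM.preimage continuous_fst).inter
      (hW.preimage (J.continuous.comp continuous_snd))).eventually_mem ⟨hfM, by simpa using h0W⟩
  obtain ⟨y, hyf, hy⟩ := exists_contDiffAt_fixedPoint_of_rightInverse hn hΨ' hΨf0 hA hJ
    (isClosed_setOf_mem_and_le_of_isClosed_unitBall hsmul hball hr)
    ⟨X'.zero_mem, hzero.trans_le hr.le⟩ <| by
      filter_upwards [hnear] with p ⟨hpM, hpW⟩ ⟨hpX', hpr⟩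
      have hJp : J p.2 ∈ X' := hJX' _ hpX'
      refine ⟨X'.sub_mem (hΨX' _ _ (hWU hpW) hJp) (hAX' _ hJp), ?_⟩
      calc norm' (Ψ (p.1, J p.2) - A (J p.2)) ≤ r / (1 + δ) * (1 + norm' (J p.2)) :=
            hMW _ hpM _ hpW hJp
        _ ≤ r / (1 + δ) * (1 + δ) := by gcongr; exact hJr _ hpX' hpr
        _ = r := by field_simp
  obtain ⟨N, hN, hNopen, hfN⟩ := _root_.eventually_nhds_iff.1 hy
  refine ⟨N, fun g => J (y g), hNopen, hfN, by simp [hyf], fun g hg => ?_, fun g hg => ?_⟩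
  · obtain ⟨⟨hyX', hyr⟩, hfix, -⟩ := hN g hg
    exact ⟨hδV _ (hJX' _ hyX') (hJr _ hyX' hyr), hfix⟩
  · exact (J.contDiff.contDiffAt.comp g (hN g hg).2.2).contDiffWithinAt

theorem stmt7 {X G : Type*} [NormedAddCommGroup X] [NormedSpace ℝ X] [CompleteSpace X]
    [NormedAddCommGroup G] [NormedSpace ℝ G]
    (X' : Submodule ℝ X) (norm' : X → ℝ)
    -- `norm'` is a norm on `X'`
    (h0 : norm' 0 = 0)
    (hpos : ∀ x ∈ X', x ≠ 0 → 0 < norm' x)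
    (hsmul : ∀ (c : ℝ), ∀ x ∈ X', norm' (c • x) = |c| * norm' x)
    (htri : ∀ x ∈ X', ∀ y ∈ X', norm' (x + y) ≤ norm' x + norm' y)
    -- `(X', norm')` is complete
    (hcomplete : ∀ u : ℕ → X, (∀ n, u n ∈ X') →
      (∀ ε : ℝ, 0 < ε → ∃ K : ℕ, ∀ m n : ℕ, K ≤ m → K ≤ n → norm' (u m - u n) < ε) →
      ∃ x ∈ X', Filter.Tendsto (fun n => norm' (u n - x)) Filter.atTop (nhds 0))
    -- the inclusion `(X', norm') ↪ (X, ‖·‖)` is continuous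
    (Ci : ℝ) (hCi : ∀ x ∈ X', ‖x‖ ≤ Ci * norm' x)
    -- the closed unit ball of `X'` is closed in `X`
    (hball : IsClosed {x : X | x ∈ X' ∧ norm' x ≤ 1})
    (f : G) (U : Set X) (hUopen : IsOpen U) (hU0 : (0 : X) ∈ U)
    (Ψ : G × X → X)
    (hΨC1 : ContDiffOn ℝ 1 Ψ (Set.univ ×ˢ U))
    (hΨf0 : Ψ (f, 0) = 0)
    (hΨX' : ∀ g : G, ∀ x ∈ U, x ∈ X' → Ψ (g, x) ∈ X')
    (A : X →L[ℝ] X)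
    (hA : HasFDerivAt (fun x => Ψ (f, x)) A 0)
    (hAX' : ∀ x ∈ X', A x ∈ X')
    (J : X →L[ℝ] X)
    (hJ : ∀ x : X, J x - A (J x) = x)
    (hJX' : ∀ x ∈ X', J x ∈ X')
    (CJ : ℝ) (hCJ : ∀ x ∈ X', norm' (J x) ≤ CJ * norm' x)
    (hsmall : ∀ ε : ℝ, 0 < ε → ∃ (Mε : Set G) (Uε : Set X), IsOpen Mε ∧ f ∈ Mε ∧
      IsOpen Uε ∧ (0 : X) ∈ Uε ∧ Uε ⊆ U ∧
      ∀ g ∈ Mε, ∀ x ∈ Uε, x ∈ X' → norm' (Ψ (g, x) - A x) ≤ ε * (1 + norm' x))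
    (V : Set X) (hVX' : V ⊆ (X' : Set X))
    (hV : ∃ δ : ℝ, 0 < δ ∧ ∀ x ∈ X', norm' x ≤ δ → x ∈ V) :
    ∃ (Nf : Set G) (c : G → X), IsOpen Nf ∧ f ∈ Nf ∧ c f = 0 ∧
      (∀ g ∈ Nf, c g ∈ V ∧ Ψ (g, c g) = c g) ∧
      ContDiffOn ℝ 1 c Nf := by
  exact stmt7_general (n := 1) one_ne_zero
    (fun x hx => (eq_or_ne x 0).elim (fun h => h ▸ h0.ge) fun h => (hpos x hx h).le)
    hsmul hball hUopen hU0 hΨC1 hΨf0 hΨX' hA hAX' hJ hJX' hCJ hsmall hV
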